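/- Let p be a prime and A an abelian group such that A[p] is finite and multiplication by n is surjective on A for every integer n ≥ 1 coprime to p. Then p^∞A = ⋂_{n≥1} pⁿA is a divisible group, and it contains every divisible subgroup of A; that is, p^∞A is the largest divisible subgroup of A. (Abstract form of Lemma 2.9, part 6.) -/

import Mathlib

/-- Let `p` be a prime and `A` an abelian group with `A[p]` finite, on which multiplication
by every `n ≥ 1` coprime to `p` is surjective. Then `p^∞A = ⋂_{n≥1} pⁿA` is a divisible
group and contains every divisible subgroup of `A`: it is the largest divisible subgroup. -/
theorem stmt_6 {A : Type*} [AddCommGroup A] (p : ℕ) (hp : p.Prime)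
    (hfin : {x : A | p • x = 0}.Finite)
    (hdiv : ∀ n : ℕ, 1 ≤ n → Nat.Coprime n p → Function.Surjective (fun x : A => n • x)) :
    (∀ a : A, (∀ k : ℕ, 1 ≤ k → ∃ x : A, p ^ k • x = a) → ∀ n : ℕ, 1 ≤ n →
        ∃ b : A, (∀ k : ℕ, 1 ≤ k → ∃ x : A, p ^ k • x = b) ∧ n • b = a) ∧
    (∀ H : AddSubgroup A, (∀ d ∈ H, ∀ n : ℕ, 1 ≤ n → ∃ e ∈ H, n • e = d) →
        ∀ x ∈ H, ∀ k : ℕ, 1 ≤ k → ∃ y : A, p ^ k • y = x) := by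
  have stepp : ∀ a : A, (∀ k : ℕ, 1 ≤ k → ∃ x : A, p ^ k • x = a) →
      ∃ b : A, (∀ k : ℕ, 1 ≤ k → ∃ x : A, p ^ k • x = b) ∧ p • b = a := by
    intro a ha
    choose x hx using fun k : ℕ => ha (k + 1) (Nat.succ_le_succ (Nat.zero_le k))
    have hb : ∀ k, p • (p ^ k • x k) = a := fun k => by
      rw [← mul_smul, ← pow_succ', hx k]
    have hF : {b : A | p • b = a}.Finite := by
      refine (hfin.image (fun t => t + x 0)).subset ?_
      intro b hb'
      have h0 := hb 0
      simp only [pow_zero, one_smul] at h0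
      refine ⟨b - x 0, ?_, by simp⟩
      have hb2 : p • b = a := hb'
      simp [smul_sub, h0, hb2]
    have : Finite {b : A | p • b = a} := hF
    obtain ⟨⟨b, hbm⟩, hinf⟩ := Finite.exists_infinite_fiber
      (fun k : ℕ => (⟨p ^ k • x k, hb k⟩ : {b : A | p • b = a}))
    refine ⟨b, fun k _ => ?_, hbm⟩
    obtain ⟨j, hj, hkj⟩ := (Set.infinite_coe_iff.mp hinf).exists_gt k
    have hj' : p ^ j • x j = b := congrArg Subtype.val hj
    refine ⟨p ^ (j - k) • x j, ?_⟩
    rw [← mul_smul, ← pow_add, Nat.add_sub_cancel' hkj.le, hj']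
  have steppe : ∀ e : ℕ, ∀ a : A, (∀ k : ℕ, 1 ≤ k → ∃ x : A, p ^ k • x = a) →
      ∃ b : A, (∀ k : ℕ, 1 ≤ k → ∃ x : A, p ^ k • x = b) ∧ p ^ e • b = a := by
    intro e
    induction e with
    | zero => exact fun a ha => ⟨a, ha, by simp⟩
    | succ e ih =>
      intro a ha
      obtain ⟨b, hb, hba⟩ := ih a ha
      obtain ⟨c, hc, hcb⟩ := stepp b hb
      exact ⟨c, hc, by rw [pow_succ, mul_smul, hcb, hba]⟩
  refine ⟨?_, ?_⟩
  · intro a ha n hn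
    obtain ⟨e, m, hm, rfl⟩ := Nat.exists_eq_pow_mul_and_not_dvd (by omega : n ≠ 0) p hp.ne_one
    have hcop : Nat.Coprime m p := ((Nat.Prime.coprime_iff_not_dvd hp).2 hm).symm
    have hm1 : 1 ≤ m := Nat.pos_of_ne_zero (by rintro rfl; simp at hm)
    obtain ⟨b, hb, hba⟩ := steppe e a ha
    obtain ⟨c, hc⟩ := hdiv m hm1 hcop b
    have hc' : m • c = b := hc
    refine ⟨c, fun k hk => ?_, by rw [mul_smul, hc', hba]⟩
    obtain ⟨x, hx⟩ := hb k hk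
    have hck : IsCoprime ((p ^ k : ℕ) : ℤ) (m : ℤ) :=
      Nat.isCoprime_iff_coprime.2 (hcop.symm.pow_left k)
    obtain ⟨u, v, huv⟩ := hck
    refine ⟨u • c + v • x, ?_⟩
    have h1 : c = (u * ((p ^ k : ℕ) : ℤ) + v * (m : ℤ)) • c := by rw [huv, one_smul]
    rw [smul_add, smul_comm _ v x, hx, ← hc']
    conv_rhs => rw [h1]
    rw [add_smul, mul_smul, mul_smul, natCast_zsmul, natCast_zsmul, smul_comm u]
  · intro H hH x hx k _
    obtain ⟨e, _, he⟩ := hH x hx (p ^ k) (Nat.pos_of_ne_zero (pow_ne_zero _ hp.ne_zero))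
    exact ⟨e, he⟩
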